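/- Let K be a commutative ring and R an associative unital K-algebra such that the structure map algebraMap K R has a K-module-theoretic left inverse, i.e., there exists a K-linear map φ : R →ₗ[K] K with φ (algebraMap K R c) = c for all c ∈ K. Suppose given, for every associative unital K-algebra S and every K-algebra homomorphism f : R →ₐ[K] S, a K-linear derivation d f : Derivation K S S, such that for all K-algebra homomorphisms f₁ : R →ₐ[K] S₁, f₂ : R →ₐ[K] S₂ and h : S₁ →ₐ[K] S₂ with h.comp f₁ = f₂, one has h ((d f₁) s) = (d f₂) (h s) for all s ∈ S₁. Then there exists b ∈ R such that for every f : R →ₐ[K] S and every t ∈ S, (d f) t = f b * t - t * f b; moreover, b is unique up to an additive constant from K: if b' ∈ R also has this property, then b' - b lies in the range of algebraMap K R. -/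

import Mathlib

universe u v

open scoped TensorProduct
open MulOpposite

namespace ExtInner

/-- The free bimodule on one generator. -/
def M (K : Type v) [CommRing K] (R : Type u) [Ring R] [Algebra K R] : Type u := R ⊗[K] Rᵐᵒᵖ

section
variable (K : Type v) [CommRing K] (R : Type u) [Ring R] [Algebra K R]

noncomputable instance : AddCommGroup (M K R) := inferInstanceAs (AddCommGroup (R ⊗[K] Rᵐᵒᵖ))
noncomputable instance : Module K (M K R) := inferInstanceAs (Module K (R ⊗[K] Rᵐᵒᵖ))
noncomputable instance : Module (R ⊗[K] Rᵐᵒᵖ) (M K R) :=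
  inferInstanceAs (Module (R ⊗[K] Rᵐᵒᵖ) (R ⊗[K] Rᵐᵒᵖ))
noncomputable instance : Module R (M K R) :=
  Module.compHom (M K R) (Algebra.TensorProduct.includeLeft : R →ₐ[K] R ⊗[K] Rᵐᵒᵖ).toRingHom
noncomputable instance : Module Rᵐᵒᵖ (M K R) :=
  Module.compHom (M K R) (Algebra.TensorProduct.includeRight : Rᵐᵒᵖ →ₐ[K] R ⊗[K] Rᵐᵒᵖ).toRingHom

variable {K R}

/-- Pure tensors. -/
noncomputable def tm (a b : R) : M K R := (a ⊗ₜ[K] op b : R ⊗[K] Rᵐᵒᵖ)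

theorem M_ind {p : M K R → Prop} (h0 : p 0) (ht : ∀ a b, p (tm a b))
    (ha : ∀ x y, p x → p y → p (x + y)) (x : M K R) : p x :=
  TensorProduct.induction_on (motive := p) x h0 (fun a b => ht a b.unop) ha

theorem smul_tm (r a b : R) : r • (tm a b : M K R) = tm (r * a) b := by
  change (r ⊗ₜ[K] (1 : Rᵐᵒᵖ)) * (a ⊗ₜ[K] op b) = (r * a) ⊗ₜ[K] op b
  simp

theorem op_smul_tm (r a b : R) : op r • (tm a b : M K R) = tm a (b * r) := by
  change ((1 : R) ⊗ₜ[K] op r) * (a ⊗ₜ[K] op b) = a ⊗ₜ[K] op (b * r)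
  simp

theorem ksmul_tm (r : K) (a b : R) : r • (tm a b : M K R) = tm (r • a) b :=
  rfl

theorem ksmul_tm' (r : K) (a b : R) : r • (tm a b : M K R) = tm a (r • b) := by
  change r • (a ⊗ₜ[K] op b) = a ⊗ₜ[K] op (r • b)
  simp

instance : SMulCommClass R Rᵐᵒᵖ (M K R) where
  smul_comm r s x := by
    induction x using M_ind with
    | h0 => simp
    | ht a b => obtain ⟨s, rfl⟩ := op_surjective s; simp [smul_tm, op_smul_tm]
    | ha x y hx hy => simp [hx, hy]

instance : IsScalarTower K R (M K R) where
  smul_assoc r s x := by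
    induction x using M_ind with
    | h0 => simp
    | ht a b => simp [smul_tm, ksmul_tm]
    | ha x y hx hy => simp [hx, hy]

instance : IsScalarTower K Rᵐᵒᵖ (M K R) where
  smul_assoc r s x := by
    induction x using M_ind with
    | h0 => simp
    | ht a b =>
      obtain ⟨s, rfl⟩ := op_surjective s
      rw [← op_smul, op_smul_tm, op_smul_tm, ksmul_tm']
      simp
    | ha x y hx hy => simp [hx, hy]

variable {S : Type*} [Ring S] [Algebra K S]

/-- The map `a ⊗ b ↦ f a * s * f b`. -/
noncomputable def L (f : R →ₐ[K] S) (s : S) : M K R →ₗ[K] S :=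
  TensorProduct.lift (R := K) (M := R) (N := Rᵐᵒᵖ)
    (LinearMap.mk₂ K (fun (a : R) (b : Rᵐᵒᵖ) => f a * s * f b.unop)
      (by intros; simp [add_mul]) (by intros; simp) (by intros; simp [mul_add])
      (by intros; simp))

@[simp] theorem L_tm (f : R →ₐ[K] S) (s : S) (a b : R) : L f s (tm a b) = f a * s * f b := rfl

theorem L_smul (f : R →ₐ[K] S) (s : S) (r : R) (x : M K R) : L f s (r • x) = f r * L f s x := by
  induction x using M_ind with
  | h0 => simp
  | ht a b => simp [smul_tm, mul_assoc]
  | ha x y hx hy => simp [hx, hy, mul_add]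

theorem L_op_smul (f : R →ₐ[K] S) (s : S) (r : R) (x : M K R) :
    L f s (op r • x) = L f s x * f r := by
  induction x using M_ind with
  | h0 => simp
  | ht a b => simp [op_smul_tm, mul_assoc]
  | ha x y hx hy => simp [hx, hy, add_mul]

theorem L_one (f : R →ₐ[K] S) (x : M K R) : L f 1 x = f (L (AlgHom.id K R) 1 x) := by
  induction x using M_ind with
  | h0 => simp
  | ht a b => simp
  | ha x y hx hy => simp [hx, hy]

/-- The comparison map from the universal square-zero extension. -/
noncomputable def H (f : R →ₐ[K] S) (s : S) :
    TrivSqZeroExt R (M K R) →ₐ[K] TrivSqZeroExt S S :=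
  TrivSqZeroExt.lift ((TrivSqZeroExt.inlAlgHom K S S).comp f)
    ((TrivSqZeroExt.inrHom S S).restrictScalars K ∘ₗ L f s)
    (by intro x y; exact TrivSqZeroExt.inr_mul_inr S _ _)
    (by
      intro r x
      change TrivSqZeroExt.inr (L f s (r • x)) =
        TrivSqZeroExt.inl (f r) * TrivSqZeroExt.inr (L f s x)
      rw [L_smul, TrivSqZeroExt.inl_mul_inr, smul_eq_mul])
    (by
      intro r x
      change TrivSqZeroExt.inr (L f s (op r • x)) =
        TrivSqZeroExt.inr (L f s x) * TrivSqZeroExt.inl (f r)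
      rw [L_op_smul, TrivSqZeroExt.inr_mul_inl, op_smul_eq_mul])

theorem H_inl (f : R →ₐ[K] S) (s : S) (r : R) :
    H f s (TrivSqZeroExt.inl r) = TrivSqZeroExt.inl (f r) :=
  TrivSqZeroExt.lift_apply_inl _ _ _ _ _ r

theorem H_inr (f : R →ₐ[K] S) (s : S) (x : M K R) :
    H f s (TrivSqZeroExt.inr x) = TrivSqZeroExt.inr (L f s x) :=
  TrivSqZeroExt.lift_apply_inr _ _ _ _ _ x

theorem H_snd (f : R →ₐ[K] S) (s : S) (x : TrivSqZeroExt R (M K R)) :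
    (H f s x).snd = L f s x.snd := by
  conv_lhs => rw [← TrivSqZeroExt.inl_fst_add_inr_snd_eq x]
  rw [map_add, H_inl, H_inr]; simp

/-- left action of `R` on `R × S`. -/
noncomputable def act (f : R →ₐ[K] S) : R →ₐ[K] Module.End K (R × S) :=
  AlgHom.ofLinearMap
    (LinearMap.mk₂ K (fun (r : R) (p : R × S) => (r * p.1, f r * p.2))
      (by intros; simp [add_mul]) (by intros; simp) (by intros; simp [mul_add])
      (by intros; simp))
    (by ext <;> simp) (by intro x y; ext <;> simp [mul_assoc])

@[simp] theorem act_apply (f : R →ₐ[K] S) (r : R) (p : R × S) :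
    act f r p = (r * p.1, f r * p.2) := rfl

/-- The projection. -/
noncomputable def P (S : Type*) [Ring S] [Algebra K S] (φ : R →ₗ[K] K) : Module.End K (R × S) :=
  LinearMap.inl K R S ∘ₗ Algebra.linearMap K R ∘ₗ φ ∘ₗ LinearMap.fst K R S

@[simp] theorem P_apply (φ : R →ₗ[K] K) (p : R × S) :
    P S φ p = (algebraMap K R (φ p.1), 0) := rfl

/-- The operator moving `1` to `s`. -/
noncomputable def X (f : R →ₐ[K] S) (s : S) : Module.End K (R × S) :=
  LinearMap.inr K R S ∘ₗ LinearMap.mulLeft K s ∘ₗ f.toLinearMap ∘ₗ LinearMap.fst K R S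

@[simp] theorem X_apply (f : R →ₐ[K] S) (s : S) (p : R × S) :
    X f s p = (0, s * f p.1) := rfl

/-- Contraction `a ⊗ b ↦ a φ(b)`. -/
noncomputable def beta (φ : R →ₗ[K] K) (x : M K R) : R :=
  (L (act (AlgHom.id K R)) (P R φ) x (1, 0)).1

theorem beta_tm (φ : R →ₗ[K] K) (a b : R) : beta φ (tm a b : M K R) = a * algebraMap K R (φ b) := by
  simp [beta]

theorem L_P (f : R →ₐ[K] S) (φ : R →ₗ[K] K) (x : M K R) :
    L (act f) (P S φ) x (1, 0) = (beta φ x, 0) := by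
  induction x using M_ind with
  | h0 => ext <;> simp [beta]
  | ht a b => simp [beta]
  | ha x y hx hy => simp [hx, hy, beta]

theorem L_X (f : R →ₐ[K] S) (s : S) (x : M K R) :
    L (act f) (X f s) x (1, 0) = (0, L f s x) := by
  induction x using M_ind with
  | h0 => ext <;> simp
  | ht a b => simp [mul_assoc]
  | ha x y hx hy => simp [hx, hy]

theorem L_XP (f : R →ₐ[K] S) (s : S) (φ : R →ₗ[K] K) (x : M K R) :
    L (act f) (X f s * P S φ) x (1, 0) = (0, f (beta φ x) * s) := by
  induction x using M_ind with
  | h0 => ext <;> simp [beta]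
  | ht a b => simp [beta, mul_assoc, Algebra.commutes]
  | ha x y hx hy => simp only [map_add, LinearMap.add_apply, hx, hy]; simp [beta, add_mul]

end
end ExtInner

open ExtInner in
theorem extended_inner_derivation_of_algebra
    (K : Type v) [CommRing K] (R : Type u) [Ring R] [Algebra K R]
    (φ : R →ₗ[K] K) (hφ : ∀ c : K, φ (algebraMap K R c) = c)
    (d : ∀ (S : Type u) [Ring S] [Algebra K S], (R →ₐ[K] S) → (S →ₗ[K] S))
    (hLeibniz : ∀ (S : Type u) [Ring S] [Algebra K S] (f : R →ₐ[K] S) (x y : S),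
      d S f (x * y) = d S f x * y + x * d S f y)
    (hnat : ∀ (S₁ S₂ : Type u) [Ring S₁] [Algebra K S₁] [Ring S₂] [Algebra K S₂]
      (f₁ : R →ₐ[K] S₁) (f₂ : R →ₐ[K] S₂) (h : S₁ →ₐ[K] S₂),
      h.comp f₁ = f₂ → ∀ s : S₁, h (d S₁ f₁ s) = d S₂ f₂ (h s)) :
    ∃ b : R,
      (∀ (S : Type u) [Ring S] [Algebra K S] (f : R →ₐ[K] S) (t : S),
        d S f t = f b * t - t * f b) ∧
      (∀ b' : R,
        (∀ (S : Type u) [Ring S] [Algebra K S] (f : R →ₐ[K] S) (t : S),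
          d S f t = f b' * t - t * f b') →
        b' - b ∈ Set.range (algebraMap K R)) := by
  have hφ1 : φ 1 = 1 := by simpa using hφ 1
  -- step 1: `d` is given by a universal tensor
  obtain ⟨D, hD⟩ : ∃ D : M K R, ∀ (S : Type u) [Ring S] [Algebra K S] (f : R →ₐ[K] S) (s : S),
      d S f s = L f s D := by
    let D0 : M K R := (d (TrivSqZeroExt R (M K R)) (TrivSqZeroExt.inlAlgHom K R (M K R))
      (TrivSqZeroExt.inr (tm 1 1))).snd
    refine ⟨D0 - tm 1 (L (AlgHom.id K R) 1 D0), ?_⟩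
    intro S _ _ f s
    have key : ∀ t : S, (d (TrivSqZeroExt S S) ((TrivSqZeroExt.inlAlgHom K S S).comp f)
        (TrivSqZeroExt.inr t)).snd = L f t D0 := by
      intro t
      have h1 := hnat _ _ (TrivSqZeroExt.inlAlgHom K R (M K R))
        ((TrivSqZeroExt.inlAlgHom K S S).comp f) (H f t)
        (by ext r <;> simp [H_inl]) (TrivSqZeroExt.inr (tm 1 1))
      rw [H_inr] at h1
      simp only [L_tm, map_one, one_mul, mul_one] at h1
      rw [← h1, H_snd]
    have h2 := hnat _ _ f _ (TrivSqZeroExt.inlAlgHom K S S) rfl s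
    have h3 := hLeibniz _ ((TrivSqZeroExt.inlAlgHom K S S).comp f)
      (TrivSqZeroExt.inl s) (TrivSqZeroExt.inr 1)
    have h4 := congrArg TrivSqZeroExt.snd h3
    rw [TrivSqZeroExt.inl_mul_inr] at h4
    simp only [TrivSqZeroExt.inlAlgHom_apply] at h2
    rw [← h2] at h4
    simp only [smul_eq_mul, mul_one, TrivSqZeroExt.snd_add, TrivSqZeroExt.snd_mul, key,
      TrivSqZeroExt.fst_inl, TrivSqZeroExt.snd_inl, TrivSqZeroExt.snd_inr, smul_zero,
      TrivSqZeroExt.fst_inr, add_zero, MulOpposite.op_zero] at h4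
    rw [map_sub, L_tm, h4, L_one]
    simp
  refine ⟨beta φ D, ?_, ?_⟩
  · intro S _ _ f s
    have h := congrArg (fun g : Module.End K (R × S) => g (1, 0))
      (hLeibniz (Module.End K (R × S)) (act f) (X f s) (P S φ))
    simp only [hD, LinearMap.add_apply, Module.End.mul_apply, L_P, L_XP, P_apply, hφ1, map_one,
      L_X, X_apply] at h
    have h' := congrArg Prod.snd h
    simp only [Prod.snd_add] at h'
    rw [hD, h', add_sub_cancel_right]
  · intro b' hb'
    have h1 := hb' (Module.End K (R × R)) (act (AlgHom.id K R)) (P R φ)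
    rw [hD] at h1
    have h2 := congrArg (fun g : Module.End K (R × R) => (g (1, 0)).1) h1
    simp only [L_P] at h2
    simp [hφ1] at h2
    exact ⟨φ b', by rw [h2]; abel⟩
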